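/- For any polynomial f of degree at most k on ℝ^n (n ≥ 3) and R > 0, the function x ↦ ∫_{|y|=R} |x−y|^{2−n} f(y) dσ(y), defined for |x| < R, is a polynomial of degree at most k in x. -/

import Mathlib

/-!
The kernel is a Gegenbauer generating function: with `l = (n - 2) / 2` and `‖x‖ < ‖y‖ = R`,
`‖x - y‖ ^ (2 - n) = R ^ (2 - n) * ∑ m, R ^ (-2 * m) * Z m x y`, where `Z m x y` is a polynomial,
homogeneous of degree `m` in `x` and in `y`, and harmonic in `y`. Green's formula makes `Z m x`
orthogonal on the sphere to every polynomial of degree less than `m`; it follows algebraically from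
the fact that rotation invariance makes the integrals of infinitesimal rotations vanish. Against a
polynomial of degree at most `k` only the terms `m ≤ k` survive, and each is a polynomial of degree
at most `m` in `x`. Finiteness of the Hausdorff measure of the sphere comes from the Lipschitz
parametrization of a hemisphere by inverse stereographic projection.
-/

open MeasureTheory Metric

noncomputable section

section SolidGegenbauer

variable {S T : Type*} [CommRing S] [Algebra ℝ S] [CommRing T] [Algebra ℝ T]

/-- The solid Gegenbauer polynomial of order `l` and degree `m` in two elements `A`, `B` of an
`ℝ`-algebra: the coefficient of `t ^ m` in `(1 - 2 * A * t + B * t ^ 2) ^ (-l)`, given by its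
three-term recurrence. At `B = 1` it is the classical Gegenbauer polynomial in `A`. -/
def solidGegenbauer (l : ℝ) (A B : S) : ℕ → S
  | 0 => 1
  | 1 => (2 * l) • A
  | m + 2 => ((m : ℝ) + 2)⁻¹ • ((2 * ((m : ℝ) + 1 + l)) • (A * solidGegenbauer l A B (m + 1))
      - ((m : ℝ) + 2 * l) • (B * solidGegenbauer l A B m))

theorem add_two_smul_solidGegenbauer (l : ℝ) (A B : S) (m : ℕ) :
    ((m : ℝ) + 2) • solidGegenbauer l A B (m + 2) =
      (2 * ((m : ℝ) + 1 + l)) • (A * solidGegenbauer l A B (m + 1))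
        - ((m : ℝ) + 2 * l) • (B * solidGegenbauer l A B m) := by
  rw [solidGegenbauer, smul_inv_smul₀ (by positivity)]

theorem map_solidGegenbauer (φ : S →ₐ[ℝ] T) (l : ℝ) (A B : S) (m : ℕ) :
    φ (solidGegenbauer l A B m) = solidGegenbauer l (φ A) (φ B) m := by
  induction m using Nat.twoStepInduction with
  | zero => simp [solidGegenbauer]
  | one => simp [solidGegenbauer]
  | more m ih₀ ih₁ => simp [solidGegenbauer, ih₀, ih₁]

theorem solidGegenbauer_smul (l c : ℝ) (A B : S) (m : ℕ) :
    solidGegenbauer l (c • A) (c ^ 2 • B) m = c ^ m • solidGegenbauer l A B m := by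
  induction m using Nat.twoStepInduction with
  | zero => simp [solidGegenbauer]
  | one => simp [solidGegenbauer, smul_smul, mul_comm]
  | more m ih₀ ih₁ =>
    simp only [solidGegenbauer, ih₀, ih₁, smul_mul_smul_comm, smul_sub, smul_smul]
    congr 2 <;> ring

theorem derivation_solidGegenbauer_succ (D : Derivation ℝ S S) {A B q : S} (hA : D A = q)
    (hB : D B = 2 * q * A) (l : ℝ) (m : ℕ) :
    D (solidGegenbauer l A B (m + 1)) = ((m : ℝ) + 2 * l) • (q * solidGegenbauer l A B m) := by
  induction m using Nat.twoStepInduction with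
  | zero => simp [solidGegenbauer, hA]
  | one =>
    refine smul_right_injective S (show ((0 : ℕ) : ℝ) + 2 ≠ 0 by norm_num) ?_
    dsimp only
    rw [← D.map_smul, add_two_smul_solidGegenbauer]
    simp only [map_sub, D.map_smul, D.leibniz, D.map_one_eq_zero, smul_eq_mul, hA, hB,
      solidGegenbauer]
    simp only [Algebra.smul_def, map_add, map_mul, map_one, map_ofNat, Nat.cast_zero,
      Nat.cast_one, map_zero]
    ring
  | more m ih₀ ih₁ =>
    have hm : ((m + 1 : ℕ) : ℝ) + 2 ≠ 0 := by positivity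
    have hrec := add_two_smul_solidGegenbauer l A B m
    refine smul_right_injective S hm ?_
    dsimp only
    rw [← D.map_smul, add_two_smul_solidGegenbauer]
    simp only [map_sub, D.map_smul, D.leibniz, smul_eq_mul, hA, hB, ih₀, ih₁]
    simp only [Algebra.smul_def, map_add, map_mul, map_one, map_ofNat, Nat.cast_add,
      Nat.cast_one, Nat.cast_ofNat] at hrec ⊢
    linear_combination (-q * (algebraMap ℝ S m + 1 + 2 * algebraMap ℝ S l)) * hrec

open PowerSeries in
theorem coeff_eq_solidGegenbauer {l : ℝ} {A B : S} {g : S⟦X⟧} (hg₀ : constantCoeff g = 1)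
    (hg : (1 - C (2 * A) * X + C B * X ^ 2) * d⁄dX S g =
      (2 * l) • ((C A - C B * X) * g)) (m : ℕ) :
    coeff m g = solidGegenbauer l A B m := by
  have hX (m : ℕ) : coeff m (X * d⁄dX S g) = m * coeff m g := by
    cases m with
    | zero => simp
    | succ m => rw [coeff_succ_X_mul, coeff_derivative]; push_cast; ring
  have hcoeff (m : ℕ) := congrArg (coeff m) hg
  simp only [add_mul, sub_mul, one_mul, map_add, map_sub, mul_assoc, coeff_C_mul, pow_two,
    coeff_smul, hX] at hcoeff
  induction m using Nat.twoStepInduction with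
  | zero => simpa [solidGegenbauer] using hg₀
  | one =>
    simpa [solidGegenbauer, coeff_derivative, hg₀] using hcoeff 0
  | more m ih₀ ih₁ =>
    refine smul_right_injective S (show (m : ℝ) + 2 ≠ 0 by positivity) ?_
    dsimp only
    rw [add_two_smul_solidGegenbauer, ← ih₀, ← ih₁]
    have := hcoeff (m + 1)
    rw [coeff_succ_X_mul, coeff_succ_X_mul, hX, coeff_derivative] at this
    simp only [Algebra.smul_def, map_add, map_mul, map_natCast, map_ofNat, map_one] at this ⊢
    push_cast at this
    linear_combination this

end SolidGegenbauer

section GeneratingFunction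

open PowerSeries ComplexConjugate

/-- The formal power series `(1 - w X) ^ (-l)`. -/
def oneSubCMulXRpowNeg (l : ℝ) (w : ℂ) : ℂ⟦X⟧ :=
  rescale (-w) (PowerSeries.binomialSeries ℂ (-(l : ℂ)))

theorem coeff_oneSubCMulXRpowNeg (l : ℝ) (w : ℂ) (i : ℕ) :
    coeff i (oneSubCMulXRpowNeg l w) = (-w) ^ i * Ring.choose (-(l : ℂ)) i := by
  simp [oneSubCMulXRpowNeg, coeff_rescale]

theorem constantCoeff_oneSubCMulXRpowNeg (l : ℝ) (w : ℂ) :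
    constantCoeff (oneSubCMulXRpowNeg l w) = 1 := by
  simp [← coeff_zero_eq_constantCoeff_apply, coeff_oneSubCMulXRpowNeg]

theorem norm_coeff_oneSubCMulXRpowNeg (l : ℝ) {w z : ℂ} (h : ‖w‖ = ‖z‖) (i : ℕ) :
    ‖coeff i (oneSubCMulXRpowNeg l w)‖ = ‖coeff i (oneSubCMulXRpowNeg l z)‖ := by
  simp [coeff_oneSubCMulXRpowNeg, h]

theorem derivative_oneSubCMulXRpowNeg (l : ℝ) (w : ℂ) :
    (1 - C w * X) * d⁄dX ℂ (oneSubCMulXRpowNeg l w) = C (l * w) * oneSubCMulXRpowNeg l w := by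
  have hrec (i : ℕ) : ((i : ℂ) + 1) * Ring.choose (-(l : ℂ)) (i + 1) =
      (-(l : ℂ) - i) * Ring.choose (-(l : ℂ)) i := by
    simpa [mul_comm] using Ring.choose_smul_choose (-(l : ℂ)) (Nat.le_succ i)
  ext i
  rw [sub_mul, one_mul, map_sub, mul_assoc, coeff_C_mul, coeff_C_mul, coeff_derivative]
  cases i with
  | zero =>
    rw [coeff_zero_X_mul]
    simp only [coeff_oneSubCMulXRpowNeg]
    have := hrec 0
    push_cast at this ⊢
    linear_combination -w * this
  | succ i =>
    rw [coeff_succ_X_mul, coeff_derivative]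
    simp only [coeff_oneSubCMulXRpowNeg]
    have := hrec (i + 1)
    push_cast at this ⊢
    linear_combination (-w) ^ (i + 2) * this

theorem hasSum_coeff_oneSubCMulXRpowNeg (l : ℝ) {w : ℂ} (hw : ‖w‖ < 1) :
    HasSum (fun i => coeff i (oneSubCMulXRpowNeg l w)) ((1 - w) ^ (-(l : ℂ))) := by
  have h := (Complex.one_add_cpow_hasFPowerSeriesOnBall_zero (a := -(l : ℂ))).hasSum (y := -w)
    (by simpa [← ENNReal.ofReal_one, Metric.eball_ofReal] using hw)
  simpa [_root_.binomialSeries, coeff_oneSubCMulXRpowNeg, mul_comm, sub_eq_add_neg] using h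

theorem coeff_mul_conj_oneSubCMulXRpowNeg (l : ℝ) (w : ℂ) (m : ℕ) :
    coeff m (oneSubCMulXRpowNeg l w * oneSubCMulXRpowNeg l (conj w)) =
      (solidGegenbauer l w.re (‖w‖ ^ 2) m : ℝ) := by
  have hre : C w + C (conj w) = C (2 * (w.re : ℂ)) := by
    rw [← map_add, Complex.add_conj]; push_cast; rfl
  have hnorm : C w * C (conj w) = C ((‖w‖ ^ 2 : ℝ) : ℂ) := by
    rw [← map_mul, Complex.mul_conj, Complex.normSq_eq_norm_sq]
  have hmap : ((solidGegenbauer l w.re (‖w‖ ^ 2) m : ℝ) : ℂ) =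
      solidGegenbauer l (w.re : ℂ) ((‖w‖ ^ 2 : ℝ) : ℂ) m :=
    map_solidGegenbauer Complex.ofRealAm l w.re (‖w‖ ^ 2) m
  rw [hmap]
  refine coeff_eq_solidGegenbauer (by simp [constantCoeff_oneSubCMulXRpowNeg]) ?_ m
  have hw := derivative_oneSubCMulXRpowNeg l w
  have hw' := derivative_oneSubCMulXRpowNeg l (conj w)
  rw [← hre, ← hnorm, Derivation.leibniz]
  simp only [smul_eq_mul, map_mul, map_ofNat, Algebra.smul_def, PowerSeries.algebraMap_apply,
    Complex.coe_algebraMap] at hre hw hw' ⊢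
  linear_combination
    (1 - C (conj w) * X) * oneSubCMulXRpowNeg l (conj w) * hw
      + (1 - C w * X) * oneSubCMulXRpowNeg l w * hw'
      + C (l : ℂ) * (oneSubCMulXRpowNeg l w * oneSubCMulXRpowNeg l (conj w)) * hre

theorem one_sub_cpow_mul_conj (l : ℝ) {w : ℂ} (hw : ‖w‖ < 1) :
    (1 - w) ^ (-(l : ℂ)) * (1 - conj w) ^ (-(l : ℂ)) = (‖1 - w‖ ^ (-(2 * l)) : ℝ) := by
  have harg : (1 - w).arg ≠ Real.pi := by
    have := Complex.mem_slitPlane_of_norm_lt_one (z := -w) (by simpa using hw)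
    rw [← sub_eq_add_neg] at this
    exact (Complex.mem_slitPlane_iff_arg.1 this).1
  have hconj : (1 - conj w) ^ (-(l : ℂ)) = conj ((1 - w) ^ (-(l : ℂ))) := by
    simpa using Complex.conj_cpow (1 - w) (-(l : ℂ)) harg
  have hnorm : ‖(1 - w) ^ (-(l : ℂ))‖ = ‖1 - w‖ ^ (-l) := by
    exact_mod_cast Complex.norm_cpow_real (1 - w) (-l)
  rw [hconj, Complex.mul_conj, Complex.normSq_eq_norm_sq, hnorm, ← Real.rpow_mul_natCast
    (norm_nonneg _)]
  congr 2
  push_cast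
  ring

theorem hasSum_solidGegenbauer_complex (l : ℝ) {w : ℂ} (hw : ‖w‖ < 1) :
    HasSum (solidGegenbauer l w.re (‖w‖ ^ 2)) (‖1 - w‖ ^ (-(2 * l))) := by
  have hw' : ‖conj w‖ < 1 := by simpa using hw
  have hs := hasSum_coeff_oneSubCMulXRpowNeg l hw
  have hs' := hasSum_coeff_oneSubCMulXRpowNeg l hw'
  have hprod := summable_norm_sum_mul_antidiagonal_of_summable_norm hs.summable.norm
    hs'.summable.norm
  have hsum := hprod.of_norm.hasSum
  rw [← tsum_mul_tsum_eq_tsum_sum_antidiagonal_of_summable_norm hs.summable.norm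
    hs'.summable.norm, hs.tsum_eq, hs'.tsum_eq, one_sub_cpow_mul_conj l hw] at hsum
  simpa only [← coeff_mul, coeff_mul_conj_oneSubCMulXRpowNeg, Complex.hasSum_ofReal] using hsum

theorem exists_summable_bound_solidGegenbauer_complex (l : ℝ) {r : ℝ} (hr₀ : 0 ≤ r) (hr₁ : r < 1) :
    ∃ b : ℕ → ℝ, Summable b ∧
      ∀ w : ℂ, ‖w‖ = r → ∀ m, |solidGegenbauer l w.re (‖w‖ ^ 2) m| ≤ b m := by
  have hr : ‖(r : ℂ)‖ = r := by simpa using hr₀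
  set a : ℕ → ℝ := fun i => ‖coeff i (oneSubCMulXRpowNeg l r)‖
  have ha : Summable fun i => ‖a i‖ :=
    (hasSum_coeff_oneSubCMulXRpowNeg l (hr.trans_lt hr₁)).summable.norm.norm
  refine ⟨_, (summable_norm_sum_mul_antidiagonal_of_summable_norm ha ha).of_norm,
    fun w hw m => ?_⟩
  rw [← Real.norm_eq_abs, ← Complex.norm_real, ← coeff_mul_conj_oneSubCMulXRpowNeg, coeff_mul]
  refine (norm_sum_le _ _).trans (Finset.sum_le_sum fun p _ => ?_)
  rw [norm_mul, norm_coeff_oneSubCMulXRpowNeg l (hw.trans hr.symm),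
    norm_coeff_oneSubCMulXRpowNeg l (((RCLike.norm_conj w).trans hw).trans hr.symm)]

variable {E : Type*} [NormedAddCommGroup E] [InnerProductSpace ℝ E]

open scoped RealInnerProductSpace

/- `w` represents `x` in a plane through `0`, `x` and `y` in which `y` is the complex number `1`. -/
theorem exists_complex_norm_eq_div (x : E) {y : E} (hy : y ≠ 0) :
    ∃ w : ℂ, w.re = (‖y‖ ^ 2)⁻¹ * ⟪x, y⟫ ∧ ‖w‖ = ‖x‖ / ‖y‖ ∧ ‖1 - w‖ = ‖x - y‖ / ‖y‖ := by
  have hy' : ‖y‖ ≠ 0 := norm_ne_zero_iff.2 hy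
  set a : ℝ := (‖y‖ ^ 2)⁻¹ * ⟪x, y⟫ with ha
  have hle : a ^ 2 ≤ (‖x‖ / ‖y‖) ^ 2 := by
    refine sq_le_sq' (abs_le.1 ?_).1 (abs_le.1 ?_).2 <;>
    · rw [ha, abs_mul, abs_of_nonneg (by positivity), inv_mul_le_iff₀ (by positivity)]
      refine (abs_real_inner_le_norm x y).trans_eq ?_
      field_simp
  set w : ℂ := ⟨a, √((‖x‖ / ‖y‖) ^ 2 - a ^ 2)⟩ with hw
  have hnorm : ‖w‖ ^ 2 = (‖x‖ / ‖y‖) ^ 2 := by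
    rw [Complex.sq_norm, Complex.normSq_apply, Real.mul_self_sqrt (sub_nonneg.2 hle)]
    ring
  have hnorm' : ‖1 - w‖ ^ 2 = (‖x - y‖ / ‖y‖) ^ 2 := by
    have hexpand : ‖1 - w‖ ^ 2 = 1 - 2 * a + ‖w‖ ^ 2 := by
      simp only [Complex.sq_norm, Complex.normSq_apply, Complex.sub_re, Complex.sub_im,
        Complex.one_re, Complex.one_im, hw]
      ring
    rw [hexpand, hnorm, div_pow, div_pow, norm_sub_sq_real, ha]
    field_simp
    ring
  exact ⟨w, rfl, (sq_eq_sq₀ (by positivity) (by positivity)).1 hnorm,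
    (sq_eq_sq₀ (by positivity) (by positivity)).1 hnorm'⟩

theorem pow_mul_solidGegenbauer_inner (l : ℝ) {x y : E} (hy : y ≠ 0) {w : ℂ}
    (hre : w.re = (‖y‖ ^ 2)⁻¹ * ⟪x, y⟫) (hnorm : ‖w‖ = ‖x‖ / ‖y‖) (m : ℕ) :
    (‖y‖ ^ 2)⁻¹ ^ m * solidGegenbauer l ⟪x, y⟫ (‖x‖ ^ 2 * ‖y‖ ^ 2) m =
      solidGegenbauer l w.re (‖w‖ ^ 2) m := by
  have hy' : ‖y‖ ≠ 0 := norm_ne_zero_iff.2 hy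
  have hsq : ‖w‖ ^ 2 = (‖y‖ ^ 2)⁻¹ ^ 2 * (‖x‖ ^ 2 * ‖y‖ ^ 2) := by
    rw [hnorm]
    field_simp
  rw [hre, hsq]
  exact (solidGegenbauer_smul l _ _ _ m).symm

theorem hasSum_solidGegenbauer_inner (l : ℝ) {x y : E} (h : ‖x‖ < ‖y‖) :
    HasSum (fun m => ‖y‖ ^ (-(2 * l)) *
        ((‖y‖ ^ 2)⁻¹ ^ m * solidGegenbauer l ⟪x, y⟫ (‖x‖ ^ 2 * ‖y‖ ^ 2) m))
      (‖x - y‖ ^ (-(2 * l))) := by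
  have hy₀ : 0 < ‖y‖ := (norm_nonneg x).trans_lt h
  have hy : y ≠ 0 := norm_pos_iff.1 hy₀
  obtain ⟨w, hre, hnorm, hnorm'⟩ := exists_complex_norm_eq_div x hy
  simp only [pow_mul_solidGegenbauer_inner l hy hre hnorm]
  have hsum := hasSum_solidGegenbauer_complex l (hnorm.trans_lt ((div_lt_one hy₀).2 h))
  have hker : ‖x - y‖ ^ (-(2 * l)) = ‖y‖ ^ (-(2 * l)) * ‖1 - w‖ ^ (-(2 * l)) := by
    rw [hnorm', ← Real.mul_rpow (by positivity) (by positivity), mul_div_cancel₀ _ hy₀.ne']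
  rw [hker]
  exact hsum.mul_left _

theorem exists_summable_bound_solidGegenbauer_inner (l : ℝ) {x : E} {R : ℝ} (h : ‖x‖ < R) :
    ∃ b : ℕ → ℝ, Summable b ∧ ∀ y : E, ‖y‖ = R → ∀ m,
      |(‖y‖ ^ 2)⁻¹ ^ m * solidGegenbauer l ⟪x, y⟫ (‖x‖ ^ 2 * ‖y‖ ^ 2) m| ≤ b m := by
  have hR : 0 < R := (norm_nonneg x).trans_lt h
  obtain ⟨b, hb, hle⟩ := exists_summable_bound_solidGegenbauer_complex l
    (div_nonneg (norm_nonneg x) hR.le) ((div_lt_one hR).2 h)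
  refine ⟨b, hb, fun y hy m => ?_⟩
  have hy₀ : y ≠ 0 := norm_pos_iff.1 (hR.trans_eq hy.symm)
  obtain ⟨w, hre, hnorm, -⟩ := exists_complex_norm_eq_div x hy₀
  rw [pow_mul_solidGegenbauer_inner l hy₀ hre hnorm]
  exact hle w (hnorm.trans (by rw [hy])) m

end GeneratingFunction

section HausdorffSphere

open Module
open scoped RealInnerProductSpace Pointwise

variable {E : Type*} [NormedAddCommGroup E] [InnerProductSpace ℝ E]

theorem exists_stereoInvFunAux_eq {v y : E} (hv : ‖v‖ = 1) (hy : ‖y‖ = 1) (hvy : ⟪v, y⟫ ≤ 0) :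
    ∃ u : (ℝ ∙ v)ᗮ, ‖u‖ ≤ 2 ∧ stereoInvFunAux v u = y := by
  have hne : y ≠ v := by
    rintro rfl
    rw [real_inner_self_eq_norm_sq, hy] at hvy
    norm_num at hvy
  have hinv := stereo_left_inv hv (x := ⟨y, by simpa using hy⟩) hne
  refine ⟨stereoToFun v y, ?_, by simpa using congrArg Subtype.val hinv⟩
  have hcoeff : ‖(2 : ℝ) / (1 - ⟪v, y⟫)‖ ≤ 2 := by
    rw [Real.norm_of_nonneg (div_nonneg (by norm_num) (by linarith)), div_le_iff₀ (by linarith)]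
    linarith
  have hproj : ‖(ℝ ∙ v)ᗮ.orthogonalProjectionOnto y‖ ≤ 1 :=
    (Submodule.norm_orthogonalProjectionOnto_apply_le _ y).trans_eq hy
  rw [stereoToFun_apply, norm_smul]
  simpa using mul_le_mul hcoeff hproj (norm_nonneg _) (by norm_num)

variable [MeasurableSpace E] [BorelSpace E] [FiniteDimensional ℝ E] {d : ℕ}

theorem hausdorffMeasure_hemisphere_lt_top (hd : finrank ℝ E = d + 1) {v : E} (hv : ‖v‖ = 1) :
    μH[d] {y : E | ‖y‖ = 1 ∧ ⟪v, y⟫ ≤ 0} < ⊤ := by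
  have hfinrank : finrank ℝ (ℝ ∙ v)ᗮ = d := by
    have : Fact (finrank ℝ E = d + 1) := ⟨hd⟩
    exact Submodule.finrank_orthogonal_span_singleton (norm_ne_zero_iff.1 (hv.trans_ne one_ne_zero))
  have hsmooth : ContDiff ℝ 1 fun u : (ℝ ∙ v)ᗮ => stereoInvFunAux v u :=
    contDiff_stereoInvFunAux.comp (ℝ ∙ v)ᗮ.subtypeL.contDiff
  obtain ⟨K, hK⟩ := hsmooth.contDiffOn.exists_lipschitzOnWith one_ne_zero
    (convex_closedBall 0 2) (isCompact_closedBall (0 : (ℝ ∙ v)ᗮ) 2)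
  have hball : μH[(d : ℝ)] (closedBall (0 : (ℝ ∙ v)ᗮ) 2) < ⊤ := by
    rw [← hfinrank]
    exact (isCompact_closedBall _ _).measure_lt_top
  refine (measure_mono ?_).trans_lt ((hK.hausdorffMeasure_image_le d.cast_nonneg).trans_lt
    (ENNReal.mul_lt_top (by finiteness) hball))
  rintro y ⟨hy, hvy⟩
  obtain ⟨u, hu, rfl⟩ := exists_stereoInvFunAux_eq hv hy hvy
  exact ⟨u, by simpa using hu, rfl⟩

theorem hausdorffMeasure_unitSphere_lt_top (hd : finrank ℝ E = d + 1) :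
    μH[d] (sphere (0 : E) 1) < ⊤ := by
  have : Nontrivial E := nontrivial_of_finrank_pos (R := ℝ) (by omega)
  obtain ⟨v, hv⟩ := exists_norm_eq E zero_le_one
  refine (measure_mono fun y hy => ?_).trans_lt (measure_union_lt_top
    (hausdorffMeasure_hemisphere_lt_top hd hv)
    (hausdorffMeasure_hemisphere_lt_top hd ((norm_neg v).trans hv)))
  rw [mem_sphere_zero_iff_norm] at hy
  rcases le_total ⟪v, y⟫ 0 with h | h
  · exact Or.inl ⟨hy, h⟩
  · exact Or.inr ⟨hy, by simpa using h⟩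

theorem hausdorffMeasure_sphere_lt_top (hd : finrank ℝ E = d + 1) (x : E) (R : ℝ) :
    μH[d] (sphere x R) < ⊤ := by
  have : Nontrivial E := nontrivial_of_finrank_pos (R := ℝ) (by omega)
  rcases lt_or_ge R 0 with hR | hR
  · simp [sphere_eq_empty_of_neg hR]
  have hsphere : sphere x R = x +ᵥ R • sphere (0 : E) 1 := by
    rw [smul_sphere R 0 zero_le_one, smul_zero, Real.norm_of_nonneg hR, mul_one, vadd_sphere_zero]
  rw [hsphere, measure_vadd, ← Set.image_smul]
  exact ((lipschitzWith_smul R).hausdorffMeasure_image_le d.cast_nonneg _).trans_lt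
    (ENNReal.mul_lt_top (by finiteness) (hausdorffMeasure_unitSphere_lt_top hd))

end HausdorffSphere

section PolynomialLaplacian

open MvPolynomial

variable {ι S : Type*} [Fintype ι] [CommRing S]

/-- The Laplacian `∑ i, ∂²/∂X i²`, acting formally on polynomials. -/
def polynomialLaplacian : MvPolynomial ι S →ₗ[S] MvPolynomial ι S :=
  ∑ i, (pderiv i).toLinearMap ∘ₗ (pderiv i).toLinearMap

theorem polynomialLaplacian_apply (f : MvPolynomial ι S) :
    polynomialLaplacian f = ∑ i, pderiv i (pderiv i f) := by
  simp [polynomialLaplacian]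

theorem polynomialLaplacian_C_mul (a : S) (f : MvPolynomial ι S) :
    polynomialLaplacian (C a * f) = C a * polynomialLaplacian f := by
  rw [← smul_eq_C_mul, map_smul, smul_eq_C_mul]

theorem polynomialLaplacian_mul (f g : MvPolynomial ι S) :
    polynomialLaplacian (f * g) = f * polynomialLaplacian g
      + 2 * ∑ i, pderiv i f * pderiv i g + polynomialLaplacian f * g := by
  simp only [polynomialLaplacian_apply, Finset.mul_sum, Finset.sum_mul, ← Finset.sum_add_distrib]
  refine Finset.sum_congr rfl fun i _ => ?_
  simp only [pderiv_mul, map_add]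
  ring

theorem polynomialLaplacian_eq_zero_of_isHomogeneous {f : MvPolynomial ι S} {k : ℕ}
    (hf : f.IsHomogeneous k) (hk : k < 2) : polynomialLaplacian f = 0 := by
  rw [polynomialLaplacian_apply]
  refine Finset.sum_eq_zero fun i _ => ?_
  have hdf : (pderiv i f).IsHomogeneous 0 := by
    simpa only [show k - 1 = 0 by omega] using hf.pderiv
  rw [totalDegree_eq_zero_iff_eq_C.1 ((totalDegree_zero_iff_isHomogeneous _).2 hdf), pderiv_C]

theorem isHomogeneous_polynomialLaplacian {f : MvPolynomial ι S} {k : ℕ}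
    (hf : f.IsHomogeneous (k + 2)) : (polynomialLaplacian f).IsHomogeneous k := by
  rw [polynomialLaplacian_apply]
  exact IsHomogeneous.sum _ _ _ fun i _ => hf.pderiv.pderiv

theorem isHomogeneous_psum (m : ℕ) : (psum ι S m).IsHomogeneous m :=
  IsHomogeneous.sum _ _ _ fun i _ => isHomogeneous_X_pow i m

theorem pderiv_psum_two (i : ι) : pderiv i (psum ι S 2) = (2 : S) • X i := by
  classical
  simp [psum, pderiv_X, Pi.single_apply, ofNat_smul_eq_nsmul]

theorem polynomialLaplacian_psum_two :
    polynomialLaplacian (psum ι S 2) = C (2 * (Fintype.card ι : S)) := by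
  simp [polynomialLaplacian_apply, pderiv_psum_two, smul_eq_C_mul, mul_comm]

theorem sum_C_mul_pderiv (x : ι → S) (f : MvPolynomial ι S) :
    ∑ i, C (x i) * pderiv i f = mkDerivation S (fun i => C (x i)) f := by
  classical
  induction f using MvPolynomial.induction_on with
  | C a => simp
  | add f g hf hg => simp only [map_add, mul_add, Finset.sum_add_distrib, hf, hg]
  | mul_X f j hf =>
    simp [mul_add, Finset.sum_add_distrib, pderiv_X, Pi.single_apply, mul_left_comm (C _),
      ← Finset.mul_sum, hf, mul_comm f]

theorem polynomialLaplacian_linear_mul (x : ι → S) (f : MvPolynomial ι S) :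
    polynomialLaplacian ((∑ i, C (x i) * X i) * f) =
      (∑ i, C (x i) * X i) * polynomialLaplacian f
        + 2 * mkDerivation S (fun i => C (x i)) f := by
  classical
  have hpderiv (j : ι) : pderiv j (∑ i, C (x i) * X i : MvPolynomial ι S) = C (x j) := by
    simp [pderiv_X, Pi.single_apply]
  rw [polynomialLaplacian_mul, ← sum_C_mul_pderiv]
  simp [polynomialLaplacian_apply (∑ i, C (x i) * X i), hpderiv]

theorem polynomialLaplacian_psum_two_mul {f : MvPolynomial ι S} {m : ℕ} (hf : f.IsHomogeneous m) :
    polynomialLaplacian (psum ι S 2 * f) =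
      psum ι S 2 * polynomialLaplacian f + (2 * Fintype.card ι + 4 * m : S) • f := by
  rw [polynomialLaplacian_mul, polynomialLaplacian_psum_two]
  simp only [pderiv_psum_two, mul_assoc, ← Finset.mul_sum, hf.sum_X_mul_pderiv, smul_eq_C_mul]
  simp only [nsmul_eq_mul, map_add, map_mul, map_natCast, map_ofNat]
  ring

end PolynomialLaplacian

section SphericalFunctional

open MvPolynomial

variable {ι : Type*} [Fintype ι] {J : MvPolynomial ι ℝ →ₗ[ℝ] ℝ} {R : ℝ}

/-- A linear functional on polynomials is spherical of radius `R` if it behaves like integration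
against a rotation-invariant measure on the sphere `∑ i, X i ^ 2 = R ^ 2`: it vanishes on the image
of the infinitesimal rotations and does not distinguish `∑ i, X i ^ 2` from `R ^ 2`. -/
structure IsSphericalFunctional (J : MvPolynomial ι ℝ →ₗ[ℝ] ℝ) (R : ℝ) : Prop where
  rotation : ∀ i j g, J (X i * pderiv j g - X j * pderiv i g) = 0
  psum_two_mul : ∀ g, J (psum ι ℝ 2 * g) = R ^ 2 * J g

theorem sum_rotation_eq (V : ι → MvPolynomial ι ℝ) :
    ∑ j, ∑ i, (X i * pderiv j (X i * V j) - X j * pderiv i (X i * V j)) =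
      psum ι ℝ 2 * ∑ j, pderiv j (V j) - ((Fintype.card ι : ℝ) - 2) • ∑ j, X j * V j
        - ∑ i, X i * pderiv i (∑ j, X j * V j) := by
  classical
  have hterm (i j : ι) : X i * pderiv j (X i * V j) - X j * pderiv i (X i * V j) =
      X i ^ 2 * pderiv j (V j) - X j * V j - X i * pderiv i (X j * V j)
        + 2 * (if i = j then X i * V j else 0) := by
    rcases eq_or_ne i j with rfl | hij
    · simp only [pderiv_mul, pderiv_X_self, if_true]
      ring
    · simp only [pderiv_mul, pderiv_X_of_ne hij, pderiv_X_of_ne hij.symm, pderiv_X_self, if_neg hij]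
      ring
  simp only [hterm, Finset.sum_add_distrib, Finset.sum_sub_distrib, ← Finset.mul_sum,
    Finset.sum_ite_eq', Finset.mem_univ, if_true, ← Finset.sum_mul, map_sum, psum,
    Finset.sum_const, Finset.card_univ, nsmul_eq_mul, smul_eq_C_mul,
    map_sub, map_natCast, map_ofNat]
  rw [Finset.sum_comm (f := fun j i => X i * pderiv i (X j * V j))]
  simp only [← Finset.mul_sum, mul_left_comm (X _)]
  ring

namespace IsSphericalFunctional

theorem divergence (hJ : IsSphericalFunctional J R) (V : ι → MvPolynomial ι ℝ) :
    R ^ 2 * J (∑ j, pderiv j (V j)) = ((Fintype.card ι : ℝ) - 2) * J (∑ j, X j * V j)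
      + J (∑ i, X i * pderiv i (∑ j, X j * V j)) := by
  have h := congrArg J (sum_rotation_eq V)
  have hzero : J (∑ j, ∑ i, (X i * pderiv j (X i * V j) - X j * pderiv i (X i * V j))) = 0 := by
    simp only [map_sum J, hJ.rotation, Finset.sum_const_zero]
  rw [hzero, map_sub, map_sub, hJ.psum_two_mul, map_smul, smul_eq_mul] at h
  linarith

theorem green (hJ : IsSphericalFunctional J R) {f h : MvPolynomial ι ℝ} {k m : ℕ}
    (hf : f.IsHomogeneous k) (hh : h.IsHomogeneous m) :
    R ^ 2 * J (h * polynomialLaplacian f - f * polynomialLaplacian h) =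
      ((Fintype.card ι : ℝ) - 2 + m + k) * (k - m) * J (h * f) := by
  have hdiv : ∑ j, pderiv j (h * pderiv j f - f * pderiv j h) =
      h * polynomialLaplacian f - f * polynomialLaplacian h := by
    simp only [polynomialLaplacian_apply, Finset.mul_sum, ← Finset.sum_sub_distrib, map_sub,
      pderiv_mul]
    exact Finset.sum_congr rfl fun j _ => by ring
  have hradial : ∑ j, X j * (h * pderiv j f - f * pderiv j h) = ((k : ℝ) - m) • (h * f) := by
    calc ∑ j, X j * (h * pderiv j f - f * pderiv j h)
        = h * ∑ j, X j * pderiv j f - f * ∑ j, X j * pderiv j h := by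
          simp only [Finset.mul_sum, ← Finset.sum_sub_distrib]
          exact Finset.sum_congr rfl fun j _ => by ring
      _ = ((k : ℝ) - m) • (h * f) := by
          rw [hf.sum_X_mul_pderiv, hh.sum_X_mul_pderiv, smul_eq_C_mul]
          simp only [nsmul_eq_mul, map_sub, map_natCast]
          ring
  have hEuler := (hh.mul hf).sum_X_mul_pderiv
  rw [← hdiv, hJ.divergence, hradial]
  simp only [(pderiv _).map_smul, mul_smul_comm, ← Finset.smul_sum, hEuler, map_smul, map_nsmul]
  simp only [smul_eq_mul, nsmul_eq_mul]
  push_cast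
  ring

theorem apply_harmonic_mul_eq_zero_of_isHomogeneous (hJ : IsSphericalFunctional J R)
    (hι : 2 ≤ Fintype.card ι) {h f : MvPolynomial ι ℝ} {k m : ℕ} (hh : h.IsHomogeneous m)
    (hharm : polynomialLaplacian h = 0) (hf : f.IsHomogeneous k) (hk : k < m) : J (h * f) = 0 := by
  induction k using Nat.strong_induction_on generalizing f with
  | _ k ih =>
  have hlap : J (h * polynomialLaplacian f) = 0 := by
    rcases lt_or_ge k 2 with hk₂ | hk₂
    · rw [polynomialLaplacian_eq_zero_of_isHomogeneous hf hk₂, mul_zero, map_zero]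
    · obtain ⟨k, rfl⟩ := Nat.exists_eq_add_of_le' hk₂
      exact ih k (by omega) (isHomogeneous_polynomialLaplacian hf) (by omega)
  have hgreen := hJ.green hf hh
  rw [hharm, mul_zero, sub_zero, hlap, mul_zero] at hgreen
  have hcard : (2 : ℝ) ≤ Fintype.card ι := mod_cast hι
  have hkm : (k : ℝ) < m := mod_cast hk
  have hfactor : ((Fintype.card ι : ℝ) - 2 + m + k) * (k - m) ≠ 0 :=
    mul_ne_zero (by have := k.cast_nonneg (α := ℝ); linarith) (by linarith)
  exact (mul_eq_zero.1 hgreen.symm).resolve_left hfactor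

theorem apply_harmonic_mul_eq_zero (hJ : IsSphericalFunctional J R) (hι : 2 ≤ Fintype.card ι)
    {h p : MvPolynomial ι ℝ} {m : ℕ} (hh : h.IsHomogeneous m) (hharm : polynomialLaplacian h = 0)
    (hp : p.totalDegree < m) : J (h * p) = 0 := by
  rw [← sum_homogeneousComponent p, Finset.mul_sum, map_sum]
  refine Finset.sum_eq_zero fun k hk => ?_
  exact hJ.apply_harmonic_mul_eq_zero_of_isHomogeneous hι hh hharm
    (homogeneousComponent_isHomogeneous k p) (by rw [Finset.mem_range] at hk; omega)

end IsSphericalFunctional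

end SphericalFunctional

section ZonalPolynomial

open MvPolynomial

variable {ι S : Type*} [CommRing S] [Algebra ℝ S]

theorem isHomogeneous_solidGegenbauer {A B : MvPolynomial ι S} (hA : A.IsHomogeneous 1)
    (hB : B.IsHomogeneous 2) (l : ℝ) (m : ℕ) : (solidGegenbauer l A B m).IsHomogeneous m := by
  have hsmul (c : ℝ) {f : MvPolynomial ι S} {d : ℕ} (hf : f.IsHomogeneous d) :
      (c • f).IsHomogeneous d := by
    rw [← algebraMap_smul S c f, smul_eq_C_mul]
    exact hf.C_mul _
  induction m using Nat.twoStepInduction with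
  | zero => exact isHomogeneous_one ι S
  | one => exact hsmul _ hA
  | more m ih₀ ih₁ =>
    have hAm := hA.mul ih₁
    have hBm := hB.mul ih₀
    rw [show 1 + (m + 1) = m + 2 by omega] at hAm
    rw [show 2 + m = m + 2 by omega] at hBm
    exact hsmul _ ((hsmul _ hAm).sub (hsmul _ hBm))

variable [Fintype ι]

/-- The polynomial `y ↦ (|x| |y|) ^ m * Gₘ(⟨x, y⟩ / (|x| |y|))`, where `Gₘ` is the Gegenbauer
polynomial of order `l` and degree `m`. The entries of `x` may be taken in any `ℝ`-algebra, and in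
particular may be indeterminates. -/
def zonalPolynomial (l : ℝ) (x : ι → S) (m : ℕ) : MvPolynomial ι S :=
  solidGegenbauer l (∑ i, C (x i) * X i) (C (∑ i, x i ^ 2) * psum ι S 2) m

theorem isHomogeneous_zonalPolynomial (l : ℝ) (x : ι → S) (m : ℕ) :
    (zonalPolynomial l x m).IsHomogeneous m :=
  isHomogeneous_solidGegenbauer (IsHomogeneous.sum _ _ _ fun i _ => isHomogeneous_C_mul_X _ i)
    ((isHomogeneous_psum 2).C_mul _) l m

theorem eval_zonalPolynomial (l : ℝ) (x y : ι → S) (m : ℕ) :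
    eval y (zonalPolynomial l x m) =
      solidGegenbauer l (∑ i, x i * y i) ((∑ i, x i ^ 2) * ∑ i, y i ^ 2) m := by
  have h := map_solidGegenbauer ((aeval y : MvPolynomial ι S →ₐ[S] S).restrictScalars ℝ) l
    (∑ i, C (x i) * X i) (C (∑ i, x i ^ 2) * psum ι S 2) m
  simpa [zonalPolynomial, psum, aeval_eq_eval] using h

theorem eval_C_zonalPolynomial_X (l : ℝ) (x : ι → S) (m : ℕ) :
    eval (fun i => C (x i)) (zonalPolynomial l (X : ι → MvPolynomial ι S) m) =
      zonalPolynomial l x m := by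
  rw [eval_zonalPolynomial, zonalPolynomial, psum, mul_comm (∑ i, X i ^ 2)]
  simp only [mul_comm (X _), map_sum, map_pow]

theorem derivation_zonalPolynomial_succ (l : ℝ) (x : ι → ℝ) (m : ℕ) :
    mkDerivation ℝ (fun i => C (x i)) (zonalPolynomial l x (m + 1)) =
      ((m : ℝ) + 2 * l) • (C (∑ i, x i ^ 2) * zonalPolynomial l x m) := by
  refine derivation_solidGegenbauer_succ _ ?_ ?_ l m
  · simp [mkDerivation_X, pow_two]
  · rw [← smul_eq_C_mul, Derivation.map_smul, psum]
    simp only [map_sum (mkDerivation ℝ _), Derivation.leibniz_pow, mkDerivation_X, smul_eq_C_mul,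
      smul_eq_mul, nsmul_eq_mul, pow_one, Nat.add_one_sub_one]
    rw [mul_comm 2, mul_assoc, Finset.mul_sum _ _ (2 : MvPolynomial ι ℝ)]
    exact congrArg _ (Finset.sum_congr rfl fun i _ => by push_cast; ring)

theorem polynomialLaplacian_zonalPolynomial {l : ℝ} (hl : (Fintype.card ι : ℝ) = 2 * l + 2)
    (x : ι → ℝ) (m : ℕ) : polynomialLaplacian (zonalPolynomial l x m) = 0 := by
  induction m using Nat.twoStepInduction with
  | zero => simp [zonalPolynomial, solidGegenbauer, polynomialLaplacian_apply]
  | one =>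
    exact polynomialLaplacian_eq_zero_of_isHomogeneous (isHomogeneous_zonalPolynomial l x 1)
      one_lt_two
  | more m ih₀ ih₁ =>
    refine smul_right_injective _ (show (m : ℝ) + 2 ≠ 0 by positivity) ?_
    have hhom := isHomogeneous_zonalPolynomial l x m
    have hderiv := derivation_zonalPolynomial_succ l x m
    dsimp only
    rw [← map_smul]
    unfold zonalPolynomial at *
    rw [add_two_smul_solidGegenbauer, map_sub, map_smul, map_smul, mul_assoc (C _),
      polynomialLaplacian_linear_mul, polynomialLaplacian_C_mul,
      polynomialLaplacian_psum_two_mul hhom, ih₀, ih₁, hderiv, hl]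
    simp only [smul_eq_C_mul, map_add, map_mul, map_one, map_ofNat]
    ring

end ZonalPolynomial

section CoefficientwiseFunctional

open MvPolynomial

theorem exists_eval_eq_linearMap_eval {σ K S : Type*} [CommRing K] [CommRing S] [Algebra K S]
    (J : S →ₗ[K] K) (G : MvPolynomial σ S) :
    ∃ q : MvPolynomial σ K, q.totalDegree ≤ G.totalDegree ∧
      ∀ x : σ → K, J (eval (fun i => algebraMap K S (x i)) G) = eval x q := by
  refine ⟨∑ s ∈ G.support, monomial s (J (coeff s G)), ?_, fun x => ?_⟩
  · exact totalDegree_finsetSum_le fun s hs =>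
      (totalDegree_monomial_le s _).trans (le_totalDegree hs)
  · rw [eval_eq, map_sum, map_sum]
    refine Finset.sum_congr rfl fun s _ => ?_
    rw [eval_monomial, Finsupp.prod, mul_comm, mul_comm (J _)]
    simp only [← map_pow, ← map_prod]
    rw [← Algebra.smul_def, map_smul, smul_eq_mul]

end CoefficientwiseFunctional

section SphericalMeasure

open NormedSpace
open scoped RealInnerProductSpace

variable {E : Type*} [NormedAddCommGroup E] [InnerProductSpace ℝ E] [MeasurableSpace E]
  {μ : Measure E} {R : ℝ}

/-- A measure carried by the sphere of radius `R` about the origin and invariant under all linear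
isometries. -/
structure IsSphericalMeasure (μ : Measure E) (R : ℝ) : Prop where
  measurePreserving (e : E ≃ₗᵢ[ℝ] E) : MeasurePreserving e μ μ
  ae_norm_eq : ∀ᵐ y ∂μ, ‖y‖ = R

variable [BorelSpace E]

theorem isSphericalMeasure_hausdorffMeasure (d R : ℝ) :
    IsSphericalMeasure (μH[d].restrict (sphere (0 : E) R)) R where
  measurePreserving e := by
    have h := (e.toIsometryEquiv.measurePreserving_hausdorffMeasure d).restrict_preimage
      (isClosed_sphere (x := (0 : E)) (ε := R)).measurableSet
    simpa using h
  ae_norm_eq := by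
    simpa using ae_restrict_mem (μ := μH[d])
      (isClosed_sphere (x := (0 : E)) (ε := R)).measurableSet

namespace IsSphericalMeasure

variable [FiniteDimensional ℝ E] [IsFiniteMeasure μ]

theorem integrable (hμ : IsSphericalMeasure μ R) {f : E → ℝ} (hf : Continuous f) :
    Integrable f μ := by
  have hsphere : ∀ᵐ y ∂μ, y ∈ sphere (0 : E) R := by simpa using hμ.ae_norm_eq
  rw [← Measure.restrict_eq_self_of_ae_mem hsphere]
  exact hf.continuousOn.integrableOn_compact (isCompact_sphere 0 R)

theorem integral_fderiv_apply_eq_zero (hμ : IsSphericalMeasure μ R) {A : E →L[ℝ] E}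
    (hA : A ∈ skewAdjoint (E →L[ℝ] E)) {f : E → ℝ} (hf : ContDiff ℝ 1 f) :
    ∫ y, fderiv ℝ f y (A y) ∂μ = 0 := by
  let : NormedAlgebra ℚ (E →L[ℝ] E) := NormedAlgebra.restrictScalars ℚ ℝ _
  let U (t : ℝ) : E ≃ₗᵢ[ℝ] E := Unitary.linearIsometryEquiv
    ⟨exp (t • A), exp_mem_unitary_of_mem_skewAdjoint (skewAdjoint.smul_mem t hA)⟩
  have hU (t : ℝ) (y : E) : U t y = exp (t • A) y := rfl
  let g (y : E) : ℝ := fderiv ℝ f y (A y)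
  have hg : Continuous g :=
    (hf.continuous_fderiv_apply one_ne_zero).comp (continuous_id.prodMk A.continuous)
  have hderiv (t : ℝ) (y : E) : HasDerivAt (fun t => f (U t y)) (g (U t y)) t := by
    have hexp := (hasDerivAt_exp_smul_const' A t).clm_apply (hasDerivAt_const t y)
    have hfU := (hf.differentiable one_ne_zero (U t y)).hasFDerivAt
    simp only [hU] at hfU ⊢
    simpa [g, Function.comp_def] using! hfU.comp_hasDerivAt t hexp
  obtain ⟨C, hC⟩ := (isCompact_sphere (0 : E) R).exists_bound_of_continuousOn hg.continuousOn
  have hbound : ∀ᵐ y ∂μ, ∀ t ∈ Set.univ, ‖g (U t y)‖ ≤ C := by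
    filter_upwards [hμ.ae_norm_eq] with y hy t _
    exact hC _ (by simpa using hy)
  have hconst (t : ℝ) : ∫ y, f (U t y) ∂μ = ∫ y, f y ∂μ :=
    (hμ.measurePreserving (U t)).integral_comp (U t).toHomeomorph.measurableEmbedding f
  have hint := (hasDerivAt_integral_of_dominated_loc_of_deriv_le (x₀ := (0 : ℝ)) Filter.univ_mem
    (.of_forall fun t => (hf.continuous.comp (U t).continuous).aestronglyMeasurable)
    (hμ.integrable (hf.continuous.comp (U 0).continuous))
    (hg.comp (U 0).continuous).aestronglyMeasurable hbound (integrable_const C)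
    (.of_forall fun y t _ => hderiv t y)).2
  simp only [Function.comp_def, hconst] at hint
  simpa [hU, g] using hint.unique (hasDerivAt_const 0 _)

theorem integral_inner_mul_fderiv_sub_eq_zero (hμ : IsSphericalMeasure μ R) (u v : E) {f : E → ℝ}
    (hf : ContDiff ℝ 1 f) :
    ∫ y, (⟪u, y⟫ * fderiv ℝ f y v - ⟪v, y⟫ * fderiv ℝ f y u) ∂μ = 0 := by
  let A : E →L[ℝ] E := InnerProductSpace.rankOne ℝ v u - InnerProductSpace.rankOne ℝ u v
  have hA : A ∈ skewAdjoint (E →L[ℝ] E) := by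
    simp [A, skewAdjoint.mem_iff, ContinuousLinearMap.star_eq_adjoint]
  simpa [A] using hμ.integral_fderiv_apply_eq_zero hA hf

end IsSphericalMeasure

end SphericalMeasure

section PolynomialIntegral

open MvPolynomial

variable {ι : Type*} [Fintype ι]

theorem contDiff_eval_ofLp (p : MvPolynomial ι ℝ) {n : WithTop ℕ∞} :
    ContDiff ℝ n fun y : EuclideanSpace ℝ ι => eval y.ofLp p :=
  (AnalyticOnNhd.eval_continuousLinearMap' (fun i : ι =>
    (EuclideanSpace.proj i : EuclideanSpace ℝ ι →L[ℝ] ℝ)) p).contDiff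

theorem hasFDerivAt_eval_ofLp (p : MvPolynomial ι ℝ) (y : EuclideanSpace ℝ ι) :
    HasFDerivAt (fun y : EuclideanSpace ℝ ι => eval y.ofLp p)
      (∑ i, eval y.ofLp (pderiv i p) • EuclideanSpace.proj (𝕜 := ℝ) i) y := by
  classical
  induction p using MvPolynomial.induction_on with
  | C a => simpa using hasFDerivAt_const a y
  | add p q hp hq =>
    simpa [add_smul, Finset.sum_add_distrib] using! hp.add hq
  | mul_X p j hp =>
    have h := hp.mul (EuclideanSpace.proj (𝕜 := ℝ) j).hasFDerivAt
    simp only [map_mul, eval_X]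
    refine h.congr_fderiv ?_
    simp [pderiv_X, Pi.single_apply, apply_ite (eval y.ofLp), add_smul, Finset.sum_add_distrib,
      Finset.smul_sum, smul_smul, add_comm]

variable {μ : Measure (EuclideanSpace ℝ ι)} {R : ℝ}

namespace IsSphericalMeasure

variable [IsFiniteMeasure μ]

/-- Integration against a finite spherical measure, as a linear functional on polynomials. -/
def polynomialIntegral (hμ : IsSphericalMeasure μ R) : MvPolynomial ι ℝ →ₗ[ℝ] ℝ where
  toFun p := ∫ y, eval y.ofLp p ∂μ
  map_add' p q := by
    simp only [map_add]
    exact integral_add (hμ.integrable (contDiff_eval_ofLp p (n := 0)).continuous)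
      (hμ.integrable (contDiff_eval_ofLp q (n := 0)).continuous)
  map_smul' c p := by simp [integral_const_mul]

theorem isSphericalFunctional_polynomialIntegral (hμ : IsSphericalMeasure μ R) :
    IsSphericalFunctional hμ.polynomialIntegral R where
  rotation i j g := by
    classical
    have h := hμ.integral_inner_mul_fderiv_sub_eq_zero (EuclideanSpace.single i 1)
      (EuclideanSpace.single j 1) (contDiff_eval_ofLp g)
    simp only [(hasFDerivAt_eval_ofLp g _).fderiv] at h
    simpa [polynomialIntegral, Pi.single_apply, EuclideanSpace.inner_single_left] using h
  psum_two_mul g := by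
    simp only [polynomialIntegral, LinearMap.coe_mk, AddHom.coe_mk, ← integral_const_mul]
    refine integral_congr_ae ?_
    filter_upwards [hμ.ae_norm_eq] with y hy
    rw [← hy, EuclideanSpace.real_norm_sq_eq]
    simp [psum]

end IsSphericalMeasure

end PolynomialIntegral

section NewtonPotential

open MvPolynomial
open scoped RealInnerProductSpace

variable {ι : Type*} [Fintype ι] {μ : Measure (EuclideanSpace ℝ ι)} {R : ℝ}

theorem eval_zonalPolynomial_ofLp (l : ℝ) (x y : EuclideanSpace ℝ ι) (m : ℕ) :
    eval y.ofLp (zonalPolynomial l x.ofLp m) =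
      solidGegenbauer l ⟪x, y⟫ (‖x‖ ^ 2 * ‖y‖ ^ 2) m := by
  rw [eval_zonalPolynomial, EuclideanSpace.real_norm_sq_eq, EuclideanSpace.real_norm_sq_eq,
    PiLp.inner_apply]
  simp [mul_comm]

namespace IsSphericalMeasure

variable [IsFiniteMeasure μ]

theorem exists_integral_zonalPolynomial_mul_eq_eval (hμ : IsSphericalMeasure μ R) (l : ℝ)
    (p : MvPolynomial ι ℝ) (m : ℕ) :
    ∃ q : MvPolynomial ι ℝ, q.totalDegree ≤ m ∧ ∀ x : ι → ℝ,
      ∫ y, eval y.ofLp (zonalPolynomial l x m * p) ∂μ = eval x q := by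
  let G : MvPolynomial ι (MvPolynomial ι ℝ) := zonalPolynomial l X m * C p
  have hG : G.totalDegree ≤ m := by
    have h := (isHomogeneous_zonalPolynomial l (X : ι → MvPolynomial ι ℝ) m).totalDegree_le
    exact (totalDegree_mul _ _).trans (by simpa using h)
  obtain ⟨q, hq, heval⟩ := exists_eval_eq_linearMap_eval hμ.polynomialIntegral G
  refine ⟨q, hq.trans hG, fun x => ?_⟩
  rw [← heval, algebraMap_eq, map_mul, eval_C_zonalPolynomial_X, eval_C]
  rfl

theorem hasSum_integral_norm_sub_rpow_mul (hμ : IsSphericalMeasure μ R) (l : ℝ)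
    {x : EuclideanSpace ℝ ι} (hx : ‖x‖ < R) (p : MvPolynomial ι ℝ) :
    HasSum (fun m => R ^ (-(2 * l)) * (R ^ 2)⁻¹ ^ m *
        ∫ y, eval y.ofLp (zonalPolynomial l x.ofLp m * p) ∂μ)
      (∫ y, ‖x - y‖ ^ (-(2 * l)) * eval y.ofLp p ∂μ) := by
  obtain ⟨b, hb, hbound⟩ := exists_summable_bound_solidGegenbauer_inner l hx
  have hp : Continuous fun y : EuclideanSpace ℝ ι => eval y.ofLp p :=
    (contDiff_eval_ofLp p (n := 0)).continuous
  let F (m : ℕ) (y : EuclideanSpace ℝ ι) : ℝ :=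
    R ^ (-(2 * l)) * (R ^ 2)⁻¹ ^ m * eval y.ofLp (zonalPolynomial l x.ofLp m * p)
  have hF (m : ℕ) : Continuous (F m) :=
    continuous_const.mul (contDiff_eval_ofLp _ (n := 0)).continuous
  simp only [← integral_const_mul]
  refine hasSum_integral_of_dominated_convergence
    (fun m y => |R ^ (-(2 * l))| * b m * |eval y.ofLp p|)
    (fun m => (hF m).aestronglyMeasurable) (fun m => ?_)
    (.of_forall fun y => (hb.mul_left _).mul_right _) ?_ ?_
  · filter_upwards [hμ.ae_norm_eq] with y hy
    have h := hbound y hy m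
    rw [hy] at h
    rw [Real.norm_eq_abs, map_mul, eval_zonalPolynomial_ofLp, hy, ← mul_assoc, abs_mul,
      mul_assoc (R ^ _), abs_mul]
    gcongr
  · simp only [tsum_mul_right]
    exact (hμ.integrable hp.abs).const_mul _
  · filter_upwards [hμ.ae_norm_eq] with y hy
    have h := (hasSum_solidGegenbauer_inner l (hx.trans_eq hy.symm)).mul_right (eval y.ofLp p)
    rw [hy] at h
    simpa only [map_mul, eval_zonalPolynomial_ofLp, hy, mul_assoc] using h

theorem exists_integral_norm_sub_rpow_mul_eq_eval (hμ : IsSphericalMeasure μ R)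
    (hι : 2 ≤ Fintype.card ι) {p : MvPolynomial ι ℝ} {k : ℕ} (hp : p.totalDegree ≤ k) :
    ∃ q : MvPolynomial ι ℝ, q.totalDegree ≤ k ∧ ∀ x : EuclideanSpace ℝ ι, ‖x‖ < R →
      ∫ y, ‖x - y‖ ^ ((2 : ℝ) - Fintype.card ι) * eval y.ofLp p ∂μ = eval x.ofLp q := by
  let l : ℝ := ((Fintype.card ι : ℝ) - 2) / 2
  choose q hq heval using hμ.exists_integral_zonalPolynomial_mul_eq_eval l p
  refine ⟨∑ m ∈ Finset.range (k + 1), (R ^ (-(2 * l)) * (R ^ 2)⁻¹ ^ m) • q m, ?_, ?_⟩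
  · refine totalDegree_finsetSum_le fun m hm => (totalDegree_smul_le _ _).trans ((hq m).trans ?_)
    exact Finset.mem_range_succ_iff.1 hm
  intro x hx
  have horth (m : ℕ) (hm : m ∉ Finset.range (k + 1)) :
      ∫ y, eval y.ofLp (zonalPolynomial l x.ofLp m * p) ∂μ = 0 :=
    hμ.isSphericalFunctional_polynomialIntegral.apply_harmonic_mul_eq_zero hι
      (isHomogeneous_zonalPolynomial l _ m)
      (polynomialLaplacian_zonalPolynomial (by simp only [l]; ring) _ m)
      (by rw [Finset.mem_range] at hm; omega)
  have hsum := hμ.hasSum_integral_norm_sub_rpow_mul l hx p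
  rw [show (2 : ℝ) - Fintype.card ι = -(2 * l) by simp only [l]; ring,
    hsum.unique (hasSum_sum_of_ne_finset_zero fun m hm => by rw [horth m hm, mul_zero])]
  simp only [heval]
  simp only [map_sum, smul_eval]

end IsSphericalMeasure

end NewtonPotential

theorem stmt_0 (n k : ℕ) (hn : 3 ≤ n) (R : ℝ) (hR : 0 < R)
    (p : MvPolynomial (Fin n) ℝ) (hp : p.totalDegree ≤ k) :
    ∃ q : MvPolynomial (Fin n) ℝ, q.totalDegree ≤ k ∧
      ∀ x : EuclideanSpace ℝ (Fin n), ‖x‖ < R →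
        (∫ y in sphere (0 : EuclideanSpace ℝ (Fin n)) R,
            ‖x - y‖ ^ ((2 : ℝ) - n) * MvPolynomial.eval (fun i => y i) p
            ∂μH[(n : ℝ) - 1])
          = MvPolynomial.eval (fun i => x i) q := by
  have hfinite : μH[(n : ℝ) - 1] (sphere (0 : EuclideanSpace ℝ (Fin n)) R) < ⊤ := by
    have hfinrank : Module.finrank ℝ (EuclideanSpace ℝ (Fin n)) = (n - 1) + 1 := by
      rw [finrank_euclideanSpace_fin]
      omega
    simpa [Nat.cast_sub (show 1 ≤ n by omega)] using hausdorffMeasure_sphere_lt_top hfinrank 0 R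
  have : IsFiniteMeasure (μH[(n : ℝ) - 1].restrict (sphere (0 : EuclideanSpace ℝ (Fin n)) R)) :=
    isFiniteMeasure_restrict.2 hfinite.ne
  have hcard : 2 ≤ Fintype.card (Fin n) := by
    rw [Fintype.card_fin]
    omega
  simpa only [Fintype.card_fin] using (isSphericalMeasure_hausdorffMeasure ((n : ℝ) - 1)
    R).exists_integral_norm_sub_rpow_mul_eq_eval hcard hp
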